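/- Let v, u be positive twice-differentiable functions on an interval with u constant and v concave (v'' ≤ 0). Let H = uv/(u+v). Then H² · (ln H)'' ≥ H² · (ln v)'', i.e., H·H'' − (H')² ≥ H²·(v·v'' − (v')²)/v². -/

import Mathlib

open Set

/-!
Since `log H = log u + log v - log (u + v)`, passing to second derivatives shows that
`(log H)'' ≥ (log v)''` amounts to `(log (u + v))'' ≤ (log u)''`. For constant `u` the right-hand
side is `0`, and `u + v` is log-concave because it is positive and concave. The second derivative
of `log f` enters as `deriv (logDeriv f)`, which makes sense for every nonvanishing `f`.
-/

section DerivLogDeriv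

open Filter Topology

variable {𝕜 𝕜' : Type*} [NontriviallyNormedField 𝕜] [NontriviallyNormedField 𝕜']
  [NormedAlgebra 𝕜 𝕜'] {f g : 𝕜 → 𝕜'} {x : 𝕜}

lemma differentiableAt_logDeriv (hf : ContDiffAt 𝕜 2 f x) (hfx : f x ≠ 0) :
    DifferentiableAt 𝕜 (logDeriv f) x :=
  have hf' : ContDiffAt 𝕜 1 (deriv f) x := hf.derivWithin (by norm_num)
  (hf'.differentiableAt one_ne_zero).div (hf.differentiableAt two_ne_zero) hfx

lemma deriv_logDeriv (hf : DifferentiableAt 𝕜 f x) (hf' : DifferentiableAt 𝕜 (deriv f) x)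
    (hfx : f x ≠ 0) :
    deriv (logDeriv f) x = (f x * deriv (deriv f) x - deriv f x ^ 2) / f x ^ 2 := by
  rw [logDeriv, deriv_div hf' hf hfx]
  ring

lemma sq_mul_deriv_logDeriv (hf : ContDiffAt 𝕜 2 f x) (hfx : f x ≠ 0) :
    f x ^ 2 * deriv (logDeriv f) x = f x * deriv (deriv f) x - deriv f x ^ 2 := by
  have hf' : ContDiffAt 𝕜 1 (deriv f) x := hf.derivWithin (by norm_num)
  rw [deriv_logDeriv (hf.differentiableAt two_ne_zero) (hf'.differentiableAt one_ne_zero) hfx,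
    mul_div_cancel₀ _ (pow_ne_zero 2 hfx)]

lemma eventually_differentiableAt_and_ne_zero (hf : ContDiffAt 𝕜 1 f x) (hfx : f x ≠ 0) :
    ∀ᶠ y in 𝓝 x, DifferentiableAt 𝕜 f y ∧ f y ≠ 0 :=
  ((hf.eventually (by simp)).mono fun _ h ↦ h.differentiableAt one_ne_zero).and
    (hf.continuousAt.eventually_ne hfx)

lemma deriv_logDeriv_mul (hf : ContDiffAt 𝕜 2 f x) (hg : ContDiffAt 𝕜 2 g x)
    (hfx : f x ≠ 0) (hgx : g x ≠ 0) :
    deriv (logDeriv (f * g)) x = deriv (logDeriv f) x + deriv (logDeriv g) x := by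
  have heq : logDeriv (f * g) =ᶠ[𝓝 x] logDeriv f + logDeriv g := by
    filter_upwards [eventually_differentiableAt_and_ne_zero (hf.of_le one_le_two) hfx,
      eventually_differentiableAt_and_ne_zero (hg.of_le one_le_two) hgx]
      with y ⟨hfd, hfy⟩ ⟨hgd, hgy⟩
    exact logDeriv_mul y hfy hgy hfd hgd
  rw [heq.deriv_eq,
    deriv_add (differentiableAt_logDeriv hf hfx) (differentiableAt_logDeriv hg hgx)]

lemma deriv_logDeriv_div (hf : ContDiffAt 𝕜 2 f x) (hg : ContDiffAt 𝕜 2 g x)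
    (hfx : f x ≠ 0) (hgx : g x ≠ 0) :
    deriv (logDeriv (f / g)) x = deriv (logDeriv f) x - deriv (logDeriv g) x := by
  have heq : logDeriv (f / g) =ᶠ[𝓝 x] logDeriv f - logDeriv g := by
    filter_upwards [eventually_differentiableAt_and_ne_zero (hf.of_le one_le_two) hfx,
      eventually_differentiableAt_and_ne_zero (hg.of_le one_le_two) hgx]
      with y ⟨hfd, hfy⟩ ⟨hgd, hgy⟩
    exact logDeriv_div y hfy hgy hfd hgd
  rw [heq.deriv_eq,
    deriv_sub (differentiableAt_logDeriv hf hfx) (differentiableAt_logDeriv hg hgx)]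

lemma deriv_logDeriv_mul_div_add (hf : ContDiffAt 𝕜 2 f x) (hg : ContDiffAt 𝕜 2 g x)
    (hfx : f x ≠ 0) (hgx : g x ≠ 0) (hfgx : f x + g x ≠ 0) :
    deriv (logDeriv (f * g / (f + g))) x =
      deriv (logDeriv f) x + deriv (logDeriv g) x - deriv (logDeriv (f + g)) x := by
  rw [deriv_logDeriv_div (f := f * g) (g := f + g) (hf.mul hg) (hf.add hg)
      (mul_ne_zero hfx hgx) hfgx,
    deriv_logDeriv_mul hf hg hfx hgx]

end DerivLogDeriv

lemma deriv_logDeriv_nonpos_of_deriv2_nonpos {f : ℝ → ℝ} {x : ℝ}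
    (hf : ContDiffAt ℝ 2 f x) (hfx : 0 < f x) (hf'' : deriv (deriv f) x ≤ 0) :
    deriv (logDeriv f) x ≤ 0 := by
  refine nonpos_of_mul_nonpos_right ?_ (pow_pos hfx 2)
  rw [sq_mul_deriv_logDeriv hf hfx.ne']
  exact sub_nonpos.2 ((mul_nonpos_of_nonneg_of_nonpos hfx.le hf'').trans (sq_nonneg _))

lemma deriv_logDeriv_const_add_nonpos_of_deriv2_nonpos {f : ℝ → ℝ} {c x : ℝ}
    (hf : ContDiffAt ℝ 2 f x) (hfx : 0 < c + f x) (hf'' : deriv (deriv f) x ≤ 0) :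
    deriv (logDeriv ((fun _ ↦ c) + f)) x ≤ 0 := by
  refine deriv_logDeriv_nonpos_of_deriv2_nonpos (contDiffAt_const.add hf) hfx ?_
  have hderiv : deriv ((fun _ ↦ c) + f) = deriv f := deriv_const_add' c
  rwa [hderiv]

theorem harmonic_mean_log_concavity_general {u v : ℝ → ℝ} {x : ℝ}
    (hu : ContDiffAt ℝ 2 u x) (hv : ContDiffAt ℝ 2 v x)
    (hux : u x ≠ 0) (hvx : v x ≠ 0) (huvx : u x + v x ≠ 0)
    (huv : deriv (logDeriv (u + v)) x ≤ deriv (logDeriv u) x) :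
    (u * v / (u + v)) x * deriv (deriv (u * v / (u + v))) x - deriv (u * v / (u + v)) x ^ 2 ≥
      (u * v / (u + v)) x ^ 2 * (v x * deriv (deriv v) x - deriv v x ^ 2) / v x ^ 2 := by
  have hH : ContDiffAt ℝ 2 (u * v / (u + v)) x := (hu.mul hv).div (hu.add hv) huvx
  have hHx : (u * v / (u + v)) x ≠ 0 := div_ne_zero (mul_ne_zero hux hvx) huvx
  have hlog : deriv (logDeriv v) x ≤ deriv (logDeriv (u * v / (u + v))) x := by
    rw [deriv_logDeriv_mul_div_add hu hv hux hvx huvx]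
    linarith
  rw [← sq_mul_deriv_logDeriv hH hHx, ← sq_mul_deriv_logDeriv hv hvx, mul_div_assoc (_ ^ 2),
    mul_div_cancel_left₀ _ (pow_ne_zero 2 hvx)]
  exact mul_le_mul_of_nonneg_left hlog (sq_nonneg _)

/-- For positive functions on an interval with u constant and v concave,
the harmonic mean H = uv/(u+v) satisfies H·H'' − (H')² ≥ H²·(v·v'' − (v')²)/v². -/
theorem harmonic_mean_log_concavity (a b : ℝ) (c : ℝ) (hc : 0 < c) (v : ℝ → ℝ)
    (hv : ∀ x ∈ Ioo a b, ContDiffAt ℝ 2 v x)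
    (hvpos : ∀ x ∈ Ioo a b, 0 < v x)
    (hvconc : ∀ x ∈ Ioo a b, deriv (deriv v) x ≤ 0) :
    ∀ x ∈ Ioo a b,
      (fun y => c * v y / (c + v y)) x * deriv (deriv (fun y => c * v y / (c + v y))) x
        - (deriv (fun y => c * v y / (c + v y)) x) ^ 2
      ≥ ((fun y => c * v y / (c + v y)) x) ^ 2
        * (v x * deriv (deriv v) x - (deriv v x) ^ 2) / (v x) ^ 2 := by
  intro x hx
  have hsum_pos : 0 < c + v x := add_pos hc (hvpos x hx)
  exact harmonic_mean_log_concavity_general contDiffAt_const (hv x hx) hc.ne' (hvpos x hx).ne'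
    hsum_pos.ne' (by simpa using
      deriv_logDeriv_const_add_nonpos_of_deriv2_nonpos (hv x hx) hsum_pos (hvconc x hx))
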